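/- For the Weyl operator W_f with symbol f ∈ 𝒟(ℚ_p^{2n}), one has W_f[ψ](ξ) = ∫ K(ξ,η) ψ(η) d^nη with kernel K(ξ,η) = ∫ f((η+ξ)/2, y) χ(∑_i (η_i - ξ_i) y_i) d^n y, and the operator norm bound ‖W_f[ψ]‖_{L²} ≤ ‖F[f]‖_{L¹} ‖ψ‖_{L²} holds for all ψ ∈ 𝒟(ℚ_p^n). -/

import Mathlib

open Classical MeasureTheory

/-- The p-adic fractional part of `x`. -/
noncomputable def padicFract (p : ℕ) [Fact p.Prime] (x : ℚ_[p]) : ℚ :=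
  if h : ∃ r : ℚ, 0 ≤ r ∧ r < 1 ∧ (∃ k : ℕ, ∃ m : ℤ, r * (p : ℚ) ^ k = (m : ℚ)) ∧
      ‖x - (r : ℚ_[p])‖ ≤ 1 then h.choose else 0

/-- The standard additive character `χ(x) = exp(2πi[x])` of `ℚ_p`. -/
noncomputable def stdChar (p : ℕ) [Fact p.Prime] (x : ℚ_[p]) : ℂ :=
  Complex.exp (2 * Real.pi * Complex.I * (padicFract p x : ℂ))

variable (p : ℕ) [Fact p.Prime] (n : ℕ) [MeasurableSpace ℚ_[p]] [BorelSpace ℚ_[p]]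
  (μ : Measure (Fin n → ℚ_[p]))

/-- The symplectic Fourier transform on `ℚ_p^{2n} = ℚ_p^n × ℚ_p^n`. -/
noncomputable def symplFourier
    (f : (Fin n → ℚ_[p]) × (Fin n → ℚ_[p]) → ℂ)
    (z : (Fin n → ℚ_[p]) × (Fin n → ℚ_[p])) : ℂ :=
  ∫ w, stdChar p ((∑ i, z.1 i * w.2 i) - ∑ i, z.2 i * w.1 i) * f w ∂(μ.prod μ)

/-- The ordinary Fourier transform `F[f](w) = ∫ f(x) χ(w·x) d^{2n}x` on `ℚ_p^{2n}`. -/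
noncomputable def fourier2n
    (f : (Fin n → ℚ_[p]) × (Fin n → ℚ_[p]) → ℂ)
    (w : (Fin n → ℚ_[p]) × (Fin n → ℚ_[p])) : ℂ :=
  ∫ x, f x * stdChar p ((∑ i, w.1 i * x.1 i) + ∑ i, w.2 i * x.2 i) ∂(μ.prod μ)

/-- The Weyl operator with symbol `f`. -/
noncomputable def weylOp
    (f : (Fin n → ℚ_[p]) × (Fin n → ℚ_[p]) → ℂ)
    (ψ : (Fin n → ℚ_[p]) → ℂ) (ξ : Fin n → ℚ_[p]) : ℂ :=
  ∫ z, symplFourier p n μ f z * ψ (ξ + z.1) *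
      stdChar p (∑ i, (z.2 i * ξ i + z.1 i * z.2 i / 2)) ∂(μ.prod μ)

/-- The kernel of the Weyl operator:
`K(ξ,η) = ∫ f((η+ξ)/2, y) χ(∑ᵢ (ηᵢ-ξᵢ)yᵢ) d^n y`. -/
noncomputable def weylKernel
    (f : (Fin n → ℚ_[p]) × (Fin n → ℚ_[p]) → ℂ)
    (ξ η : Fin n → ℚ_[p]) : ℂ :=
  ∫ y, f (fun i => (η i + ξ i) / 2, y) * stdChar p (∑ i, (η i - ξ i) * y i) ∂μ

section CharLemmas

theorem aux_int_of_norm_le {q : ℕ} [Fact q.Prime] (r : ℚ) (k : ℕ) (m : ℤ)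
    (h : r * (q : ℚ) ^ k = m) (hn : ‖(r : ℚ_[q])‖ ≤ 1) : ∃ l : ℤ, r = l := by
  have hq : (0 : ℝ) < q := by exact_mod_cast (Fact.out : q.Prime).pos
  have hq' : (q : ℚ) ≠ 0 := by exact_mod_cast (Fact.out : q.Prime).ne_zero
  have h2 : ((m : ℤ) : ℚ_[q]) = (r : ℚ_[q]) * (q : ℚ_[q]) ^ k := by
    have := congrArg (fun x : ℚ => (x : ℚ_[q])) h
    push_cast at this
    exact this.symm
  have h3 : ‖((m : ℤ) : ℚ_[q])‖ ≤ (q : ℝ) ^ (-(k : ℤ)) := by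
    rw [h2, norm_mul, norm_pow, Padic.norm_p, zpow_neg, zpow_natCast, inv_pow]
    have : 0 ≤ ((q : ℝ) ^ k)⁻¹ := by positivity
    nlinarith
  rw [Padic.norm_int_le_pow_iff_dvd] at h3
  obtain ⟨l, hl⟩ := h3
  refine ⟨l, ?_⟩
  have hk : (q : ℚ) ^ k ≠ 0 := pow_ne_zero _ hq'
  apply mul_right_cancel₀ hk
  rw [h, hl]
  push_cast
  ring

theorem aux_exists_fract {q : ℕ} [Fact q.Prime] (x : ℚ_[q]) :
    ∃ r : ℚ, 0 ≤ r ∧ r < 1 ∧ (∃ k : ℕ, ∃ m : ℤ, r * (q : ℚ) ^ k = (m : ℚ)) ∧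
      ‖x - (r : ℚ_[q])‖ ≤ 1 := by
  have hq : (0 : ℝ) < q := by exact_mod_cast (Fact.out : q.Prime).pos
  have hq1 : (1 : ℝ) < q := by exact_mod_cast (Fact.out : q.Prime).one_lt
  have hqQ : (0 : ℚ) < q := by exact_mod_cast (Fact.out : q.Prime).pos
  have hqp : (q : ℚ_[q]) ≠ 0 := by exact_mod_cast (Fact.out : q.Prime).ne_zero
  obtain ⟨k, hk⟩ := pow_unbounded_of_one_lt ‖x‖ hq1
  have hqk : (0 : ℝ) < (q : ℝ) ^ k := by positivity
  have h1 : ‖x * (q : ℚ_[q]) ^ k‖ ≤ 1 := by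
    rw [norm_mul, norm_pow, Padic.norm_p, inv_pow]
    rw [← div_eq_mul_inv, div_le_one hqk]
    exact hk.le
  set y : ℤ_[q] := ⟨x * (q : ℚ_[q]) ^ k, h1⟩ with hy
  have h2 := PadicInt.appr_spec k y
  rw [← PadicInt.norm_le_pow_iff_mem_span_pow] at h2
  have h3 : ‖x * (q : ℚ_[q]) ^ k - (y.appr k : ℚ_[q])‖ ≤ (q : ℝ) ^ (-(k : ℤ)) := by
    have := h2
    rw [PadicInt.norm_def, PadicInt.coe_sub, PadicInt.coe_natCast] at this
    exact this
  refine ⟨(y.appr k : ℚ) / (q : ℚ) ^ k, by positivity, ?_, ⟨k, y.appr k, ?_⟩, ?_⟩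
  · rw [div_lt_one (by positivity)]
    exact_mod_cast PadicInt.appr_lt y k
  · field_simp
    push_cast
    rfl
  · have h4 : x - (((y.appr k : ℚ) / (q : ℚ) ^ k : ℚ) : ℚ_[q]) =
        (x * (q : ℚ_[q]) ^ k - (y.appr k : ℚ_[q])) * ((q : ℚ_[q]) ^ k)⁻¹ := by
      push_cast
      field_simp
    rw [h4, norm_mul, norm_inv, norm_pow, Padic.norm_p, inv_pow, inv_inv]
    rw [zpow_neg, zpow_natCast] at h3
    calc _ ≤ ((q : ℝ) ^ k)⁻¹ * (q : ℝ) ^ k := by gcongr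
      _ = 1 := by field_simp

theorem aux_fract_spec {q : ℕ} [Fact q.Prime] (x : ℚ_[q]) :
    (∃ k : ℕ, ∃ m : ℤ, padicFract q x * (q : ℚ) ^ k = (m : ℚ)) ∧
      ‖x - (padicFract q x : ℚ_[q])‖ ≤ 1 := by
  have h := aux_exists_fract x
  unfold padicFract
  rw [dif_pos h]
  exact ⟨h.choose_spec.2.2.1, h.choose_spec.2.2.2⟩

theorem aux_nonarch {q : ℕ} [Fact q.Prime] {x y : ℚ_[q]} {c : ℝ} (hx : ‖x‖ ≤ c) (hy : ‖y‖ ≤ c) :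
    ‖x + y‖ ≤ c := (Padic.nonarchimedean x y).trans (max_le hx hy)

theorem aux_nonarch_sub {q : ℕ} [Fact q.Prime] {x y : ℚ_[q]} {c : ℝ} (hx : ‖x‖ ≤ c)
    (hy : ‖y‖ ≤ c) : ‖x - y‖ ≤ c := by
  rw [sub_eq_add_neg]; exact aux_nonarch hx (by rwa [norm_neg])

theorem stdChar_eq {q : ℕ} [Fact q.Prime] (x : ℚ_[q]) (r : ℚ)
    (hr : ∃ k : ℕ, ∃ m : ℤ, r * (q : ℚ) ^ k = (m : ℚ)) (hx : ‖x - (r : ℚ_[q])‖ ≤ 1) :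
    stdChar q x = Complex.exp (2 * Real.pi * Complex.I * (r : ℂ)) := by
  obtain ⟨⟨k, m, hkm⟩, h2⟩ := aux_fract_spec x
  obtain ⟨k', m', hkm'⟩ := hr
  obtain ⟨l, hl⟩ := aux_int_of_norm_le (q := q) (padicFract q x - r) (k + k')
    (m * q ^ k' - m' * q ^ k) (by push_cast; rw [← hkm, ← hkm']; ring) (by
      have : ((padicFract q x - r : ℚ) : ℚ_[q]) =
        (x - (r : ℚ_[q])) - (x - (padicFract q x : ℚ_[q])) := by push_cast; ring
      rw [this]
      exact aux_nonarch_sub hx h2)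
  unfold stdChar
  rw [Complex.exp_eq_exp_iff_exists_int]
  refine ⟨l, ?_⟩
  have : (padicFract q x : ℂ) = r + l := by
    have h : padicFract q x = r + l := by rw [← hl]; ring
    rw [h]; push_cast; ring
  rw [this]; ring

theorem stdChar_add {q : ℕ} [Fact q.Prime] (x y : ℚ_[q]) :
    stdChar q (x + y) = stdChar q x * stdChar q y := by
  obtain ⟨⟨k, m, hkm⟩, h2⟩ := aux_fract_spec x
  obtain ⟨⟨k', m', hkm'⟩, h2'⟩ := aux_fract_spec y
  rw [stdChar_eq (x + y) (padicFract q x + padicFract q y)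
    ⟨k + k', m * q ^ k' + m' * q ^ k, by push_cast; rw [← hkm, ← hkm']; ring⟩ (by
      have : x + y - ((padicFract q x + padicFract q y : ℚ) : ℚ_[q]) =
        (x - (padicFract q x : ℚ_[q])) + (y - (padicFract q y : ℚ_[q])) := by push_cast; ring
      rw [this]; exact aux_nonarch h2 h2')]
  unfold stdChar
  rw [← Complex.exp_add]
  push_cast
  ring_nf

theorem stdChar_norm {q : ℕ} [Fact q.Prime] (x : ℚ_[q]) : ‖stdChar q x‖ = 1 := by
  unfold stdChar
  rw [Complex.norm_exp]
  simp

theorem stdChar_of_norm_le {q : ℕ} [Fact q.Prime] {x : ℚ_[q]} (hx : ‖x‖ ≤ 1) :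
    stdChar q x = 1 := by
  rw [stdChar_eq x 0 ⟨0, 0, by simp⟩ (by simpa using hx)]
  simp

theorem stdChar_inv_p_ne {q : ℕ} [Fact q.Prime] : stdChar q ((q : ℚ_[q])⁻¹) ≠ 1 := by
  have hq : (q : ℚ) ≠ 0 := by exact_mod_cast (Fact.out : q.Prime).ne_zero
  have hqC : (q : ℂ) ≠ 0 := by exact_mod_cast (Fact.out : q.Prime).ne_zero
  rw [stdChar_eq _ ((q : ℚ)⁻¹) ⟨1, 1, by field_simp; simp⟩ (by simp)]
  intro h
  rw [Complex.exp_eq_one_iff] at h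
  obtain ⟨l, hl⟩ := h
  have h2 : (2 * Real.pi * Complex.I : ℂ) ≠ 0 := by
    simp [Real.pi_ne_zero]
  rw [mul_comm, mul_left_inj' h2] at hl
  push_cast at hl
  have h3 : (1 : ℂ) = l * q := by rw [← hl]; field_simp
  have h4 : (1 : ℤ) = l * q := by exact_mod_cast h3
  have h5 : (q : ℤ) ∣ 1 := ⟨l, by rw [h4]; ring⟩
  have h6 : q ∣ 1 := by exact_mod_cast h5
  exact (Fact.out : q.Prime).one_lt.ne' (Nat.dvd_one.mp h6)

theorem stdChar_continuous {q : ℕ} [Fact q.Prime] : Continuous (stdChar q) := by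
  rw [continuous_iff_continuousAt]
  intro x
  apply ContinuousAt.congr (f := fun _ => stdChar q x) continuousAt_const
  filter_upwards [Metric.ball_mem_nhds x one_pos] with y hy
  have : y = x + (y - x) := by ring
  rw [this, stdChar_add, stdChar_of_norm_le (x := y - x), mul_one]
  rw [← dist_eq_norm]
  exact (Metric.mem_ball.mp hy).le

theorem aux_exists_shift {q : ℕ} [Fact q.Prime] {n : ℕ} (u : Fin n → ℚ_[q]) (k : ℤ)
    (hu : ¬ ‖u‖ ≤ (q : ℝ) ^ k) :
    ∃ h : Fin n → ℚ_[q], ‖h‖ ≤ (q : ℝ) ^ (-k) ∧ stdChar q (u ⬝ᵥ h) ≠ 1 := by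
  have hq : (0 : ℝ) < q := by exact_mod_cast (Fact.out : q.Prime).pos
  rw [pi_norm_le_iff_of_nonneg (by positivity)] at hu
  push Not at hu
  obtain ⟨i, hi⟩ := hu
  have hi0 : u i ≠ 0 := by
    intro h0
    rw [h0, norm_zero] at hi
    exact absurd hi (not_lt.mpr (by positivity))
  have hi' : (q : ℝ) ^ (k + 1) ≤ ‖u i‖ := by
    by_contra hlt
    push Not at hlt
    rw [← Padic.norm_le_pow_iff_norm_lt_pow_add_one] at hlt
    exact absurd hi (not_lt.mpr hlt)
  refine ⟨Pi.single i ((q : ℚ_[q])⁻¹ / u i), ?_, ?_⟩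
  · rw [Pi.norm_single, norm_div, norm_inv, Padic.norm_p, inv_inv, div_le_iff₀ (by positivity)]
    calc (q : ℝ) = (q : ℝ) ^ (-k) * (q : ℝ) ^ (k + 1) := by
          rw [← zpow_add₀ hq.ne']; simp
      _ ≤ _ := by gcongr
  · rw [dotProduct_single, mul_div_cancel₀ _ hi0]
    exact stdChar_inv_p_ne

theorem aux_dot_norm {q : ℕ} [Fact q.Prime] {n : ℕ} (u h : Fin n → ℚ_[q]) (k : ℤ)
    (hu : ‖u‖ ≤ (q : ℝ) ^ k) (hh : ‖h‖ ≤ (q : ℝ) ^ (-k)) : stdChar q (u ⬝ᵥ h) = 1 := by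
  have hq : (0 : ℝ) < q := by exact_mod_cast (Fact.out : q.Prime).pos
  apply stdChar_of_norm_le
  unfold dotProduct
  apply IsUltrametricDist.norm_sum_le_of_forall_le_of_nonneg zero_le_one
  intro i _
  rw [norm_mul]
  calc ‖u i‖ * ‖h i‖ ≤ (q : ℝ) ^ k * (q : ℝ) ^ (-k) := by
        gcongr
        · exact (norm_le_pi_norm u i).trans hu
        · exact (norm_le_pi_norm h i).trans hh
    _ = 1 := by rw [← zpow_add₀ hq.ne']; simp

theorem aux_unif_const {E : Type*} [NormedAddCommGroup E] (g : E → ℂ) (hg : IsLocallyConstant g)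
    (hgc : HasCompactSupport g) : ∃ ε > 0, ∀ x h : E, ‖h‖ < ε → g (x + h) = g x := by
  obtain ⟨δ, hδ, H⟩ := lebesgue_number_lemma_of_metric (s := tsupport g)
    (c := fun z : ℂ => g ⁻¹' {z}) hgc (fun z => hg.isOpen_fiber z)
    (fun x _ => Set.mem_iUnion.mpr ⟨g x, rfl⟩)
  have key : ∀ x ∈ tsupport g, ∀ y, dist y x < δ → g y = g x := by
    intro x hx y hy
    obtain ⟨z, hz⟩ := H x hx
    have h1 : g x = z := hz (Metric.mem_ball_self hδ)
    have h2 : g y = z := hz (Metric.mem_ball.mpr hy)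
    rw [h1, h2]
  refine ⟨δ, hδ, fun x h hh => ?_⟩
  have hd : dist (x + h) x < δ := by simpa [dist_eq_norm] using hh
  by_cases hx : x ∈ tsupport g
  · exact key x hx _ hd
  by_cases hy : x + h ∈ tsupport g
  · exact (key _ hy x (by rwa [dist_comm])).symm
  rw [image_eq_zero_of_notMem_tsupport hx, image_eq_zero_of_notMem_tsupport hy]

theorem aux_unif_const_pow {E : Type*} [NormedAddCommGroup E] {q : ℕ} [Fact q.Prime] (g : E → ℂ)
    (hg : IsLocallyConstant g) (hgc : HasCompactSupport g) :
    ∃ k : ℤ, ∀ x h : E, ‖h‖ ≤ (q : ℝ) ^ (-k) → g (x + h) = g x := by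
  have hq1 : (1 : ℝ) < q := by exact_mod_cast (Fact.out : q.Prime).one_lt
  obtain ⟨ε, hε, H⟩ := aux_unif_const g hg hgc
  obtain ⟨k, hk⟩ := exists_pow_lt_of_lt_one hε (inv_lt_one_of_one_lt₀ hq1)
  refine ⟨k, fun x h hh => H x h (hh.trans_lt ?_)⟩
  rw [zpow_neg, zpow_natCast, ← inv_pow]
  exact hk

theorem aux_integral_zero {G : Type*} [AddCommGroup G] [MeasurableSpace G] [MeasurableAdd G]
    (ν : Measure G) [ν.IsAddLeftInvariant] (φ : G → ℂ) (h : G) (c : ℂ) (hc : c ≠ 1)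
    (H : ∀ x, φ (x + h) = c * φ x) : ∫ x, φ x ∂ν = 0 := by
  have h1 := integral_add_left_eq_self (μ := ν) φ h
  simp_rw [add_comm h, H] at h1
  rw [integral_const_mul] at h1
  have h2 : (c - 1) * ∫ x, φ x ∂ν = 0 := by rw [sub_mul, h1]; ring
  rcases mul_eq_zero.mp h2 with h3 | h3
  · exact absurd (sub_eq_zero.mp h3) hc
  · exact h3

end CharLemmas

section MeasLemmas

theorem aux_smul_ball {q : ℕ} [Fact q.Prime] {n : ℕ} (k m : ℤ) :
    (fun x : Fin n → ℚ_[q] => ((q : ℚ_[q]) ^ k) • x) ⁻¹' (Metric.closedBall 0 ((q : ℝ) ^ m)) =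
      Metric.closedBall 0 ((q : ℝ) ^ (m + k)) := by
  have hq : (0 : ℝ) < q := by exact_mod_cast (Fact.out : q.Prime).pos
  ext x
  simp only [Set.mem_preimage, mem_closedBall_zero_iff, norm_smul, norm_zpow, Padic.norm_p]
  rw [inv_zpow', zpow_neg, inv_mul_le_iff₀ (by positivity), ← zpow_add₀ hq.ne', add_comm k m]

theorem aux_measure_ball (q : ℕ) [Fact q.Prime] (n : ℕ) [MeasurableSpace ℚ_[q]]
    [BorelSpace ℚ_[q]] (μ : Measure (Fin n → ℚ_[q])) [μ.IsAddHaarMeasure]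
    (hμ : μ {x : Fin n → ℚ_[q] | ∀ i, ‖x i‖ ≤ 1} = 1) (k : ℤ) :
    μ.real (Metric.closedBall 0 ((q : ℝ) ^ k)) * μ.real (Metric.closedBall 0 ((q : ℝ) ^ (-k)))
      = 1 := by
  have hq : (q : ℚ_[q]) ≠ 0 := by exact_mod_cast (Fact.out : q.Prime).ne_zero
  have h0 : μ (Metric.closedBall 0 ((q : ℝ) ^ (0 : ℤ))) = 1 := by
    rw [← hμ]
    congr 1
    ext x
    simp [pi_norm_le_iff_of_nonneg]
  let L : (Fin n → ℚ_[q]) ≃L[ℚ_[q]] (Fin n → ℚ_[q]) :=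
    ContinuousLinearEquiv.smulLeft (Units.mk0 ((q : ℚ_[q]) ^ k) (zpow_ne_zero _ hq))
  have hL : (L : (Fin n → ℚ_[q]) → (Fin n → ℚ_[q])) = fun x => ((q : ℚ_[q]) ^ k) • x := rfl
  have : (μ.map L).IsAddHaarMeasure := L.isAddHaarMeasure_map μ
  have h1 := Measure.isAddLeftInvariant_eq_smul (μ.map L) μ
  set c := Measure.addHaarScalarFactor (μ.map L) μ
  have hm : Measurable L := L.continuous.measurable
  have h2 : ∀ m : ℤ, μ (Metric.closedBall 0 ((q : ℝ) ^ (m + k))) =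
      c * μ (Metric.closedBall 0 ((q : ℝ) ^ m)) := by
    intro m
    have := congrArg (fun ν => ν (Metric.closedBall 0 ((q : ℝ) ^ m))) h1
    simp only [Measure.map_apply hm Metric.isClosed_closedBall.measurableSet] at this
    rw [hL, aux_smul_ball] at this
    rw [this]
    rfl
  have h3 := h2 0
  have h4 := h2 (-k)
  rw [h0, zero_add, mul_one] at h3
  rw [neg_add_cancel, h0] at h4
  unfold Measure.real
  rw [← ENNReal.toReal_mul, h3, ← h4]
  simp

theorem aux_dirichlet {q : ℕ} [Fact q.Prime] {n : ℕ} [MeasurableSpace ℚ_[q]]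
    [BorelSpace ℚ_[q]] (μ : Measure (Fin n → ℚ_[q])) [μ.IsAddHaarMeasure] (k : ℤ)
    (u : Fin n → ℚ_[q]) :
    ∫ y in Metric.closedBall 0 ((q : ℝ) ^ k), stdChar q (u ⬝ᵥ y) ∂μ =
      if ‖u‖ ≤ (q : ℝ) ^ (-k) then (μ.real (Metric.closedBall 0 ((q : ℝ) ^ k)) : ℂ) else 0 := by
  have hB : MeasurableSet (Metric.closedBall (0 : Fin n → ℚ_[q]) ((q : ℝ) ^ k)) :=
    Metric.isClosed_closedBall.measurableSet
  split_ifs with hu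
  · rw [setIntegral_congr_fun (g := fun _ => (1 : ℂ)) hB]
    · simp
    · intro y hy
      exact aux_dot_norm u y (-k) hu (by simpa using hy)
  · obtain ⟨h, hh, hne⟩ := aux_exists_shift u (-k) hu
    rw [neg_neg] at hh
    rw [← integral_indicator hB]
    apply aux_integral_zero μ _ h _ hne
    intro y
    have hiff : y + h ∈ Metric.closedBall (0 : Fin n → ℚ_[q]) ((q : ℝ) ^ k) ↔
        y ∈ Metric.closedBall (0 : Fin n → ℚ_[q]) ((q : ℝ) ^ k) := by
      simp only [mem_closedBall_zero_iff]
      constructor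
      · intro h1
        have : y = (y + h) - h := by abel
        rw [this, sub_eq_add_neg]
        exact (IsUltrametricDist.norm_add_le_max _ _).trans (max_le h1 (by rwa [norm_neg]))
      · intro h1
        exact (IsUltrametricDist.norm_add_le_max _ _).trans (max_le h1 hh)
    by_cases hy : y ∈ Metric.closedBall (0 : Fin n → ℚ_[q]) ((q : ℝ) ^ k)
    · rw [Set.indicator_of_mem hy, Set.indicator_of_mem (hiff.mpr hy), dotProduct_add, stdChar_add,
        mul_comm]
    · rw [Set.indicator_of_notMem hy, Set.indicator_of_notMem (fun h' => hy (hiff.mp h')), mul_zero]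

theorem aux_inversion {q : ℕ} [Fact q.Prime] {n : ℕ} [MeasurableSpace ℚ_[q]]
    [BorelSpace ℚ_[q]] (μ : Measure (Fin n → ℚ_[q])) [μ.IsAddHaarMeasure]
    (hμ : μ {x : Fin n → ℚ_[q] | ∀ i, ‖x i‖ ≤ 1} = 1) (k : ℤ)
    (g : (Fin n → ℚ_[q]) → ℂ) (hgc : HasCompactSupport g)
    (hg : ∀ x h, ‖h‖ ≤ (q : ℝ) ^ (-k) → g (x + h) = g x) (a : Fin n → ℚ_[q]) :
    ∫ y, stdChar q (y ⬝ᵥ a) * ∫ w, stdChar q (-(y ⬝ᵥ w)) * g w ∂μ ∂μ = g a := by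
  have hq : (0 : ℝ) < q := by exact_mod_cast (Fact.out : q.Prime).pos
  have hB : MeasurableSet (Metric.closedBall (0 : Fin n → ℚ_[q]) ((q : ℝ) ^ k)) :=
    Metric.isClosed_closedBall.measurableSet
  have hcont : Continuous g := by
    rw [continuous_iff_continuousAt]
    intro x
    apply ContinuousAt.congr (f := fun _ => g x) continuousAt_const
    filter_upwards [Metric.ball_mem_nhds x (ε := (q : ℝ) ^ (-k)) (by positivity)] with y hy
    have : y = x + (y - x) := by abel
    rw [this, hg]
    rw [← dist_eq_norm]
    exact (Metric.mem_ball.mp hy).le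
  have hgi : Integrable g μ := hcont.integrable_of_hasCompactSupport hgc
  have hchar := stdChar_continuous (q := q)
  -- vanishing of the Fourier transform outside the ball
  rw [← setIntegral_eq_integral_of_forall_compl_eq_zero
    (s := Metric.closedBall (0 : Fin n → ℚ_[q]) ((q : ℝ) ^ k))]
  swap
  · intro y hy
    rw [mem_closedBall_zero_iff] at hy
    obtain ⟨h, hh, hne⟩ := aux_exists_shift (-y) k (by rwa [norm_neg])
    rw [aux_integral_zero μ _ h _ hne, mul_zero]
    intro w
    rw [hg w h hh, dotProduct_add, neg_add, stdChar_add, neg_dotProduct]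
    ring
  have h1 : ∀ y : Fin n → ℚ_[q], stdChar q (y ⬝ᵥ a) * ∫ w, stdChar q (-(y ⬝ᵥ w)) * g w ∂μ =
      ∫ w, stdChar q ((a - w) ⬝ᵥ y) * g w ∂μ := by
    intro y
    rw [← integral_const_mul]
    congr 1
    ext w
    rw [← mul_assoc, ← stdChar_add, sub_dotProduct, dotProduct_comm a y, dotProduct_comm w y,
      sub_eq_add_neg]
  simp_rw [h1]
  rw [integral_integral_swap]
  swap
  · have hc : Continuous (Function.uncurry fun (y w : Fin n → ℚ_[q]) =>
        stdChar q ((a - w) ⬝ᵥ y) * g w) := by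
      unfold Function.uncurry
      simp only [dotProduct]
      fun_prop
    have hfin : IsFiniteMeasure (μ.restrict (Metric.closedBall (0 : Fin n → ℚ_[q]) ((q : ℝ) ^ k))) :=
      ⟨by
        rw [Measure.restrict_apply_univ]
        exact (isCompact_closedBall _ _).measure_lt_top⟩
    have hi := Integrable.mul_prod (μ := μ.restrict
      (Metric.closedBall (0 : Fin n → ℚ_[q]) ((q : ℝ) ^ k))) (ν := μ)
      (f := fun _ => (1 : ℂ)) (g := g) (integrable_const _) hgi
    refine hi.mono hc.aestronglyMeasurable (Filter.Eventually.of_forall fun z => ?_)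
    simp [Function.uncurry, stdChar_norm]
  simp_rw [integral_mul_const, aux_dirichlet]
  have h2 : ∀ w : Fin n → ℚ_[q], (if ‖a - w‖ ≤ (q : ℝ) ^ (-k) then
      (μ.real (Metric.closedBall 0 ((q : ℝ) ^ k)) : ℂ) else 0) * g w =
      (Metric.closedBall a ((q : ℝ) ^ (-k))).indicator
        (fun _ => (μ.real (Metric.closedBall 0 ((q : ℝ) ^ k)) : ℂ) * g a) w := by
    intro w
    by_cases hw : ‖a - w‖ ≤ (q : ℝ) ^ (-k)
    · rw [if_pos hw, Set.indicator_of_mem]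
      · have : w = a + (w - a) := by abel
        rw [this, hg]
        rwa [norm_sub_rev]
      · rwa [Metric.mem_closedBall, dist_comm, dist_eq_norm]
    · rw [if_neg hw, Set.indicator_of_notMem, zero_mul]
      rwa [Metric.mem_closedBall, dist_comm, dist_eq_norm]
  simp_rw [h2]
  rw [integral_indicator Metric.isClosed_closedBall.measurableSet, setIntegral_const]
  have h3 : μ.real (Metric.closedBall a ((q : ℝ) ^ (-k))) =
      μ.real (Metric.closedBall 0 ((q : ℝ) ^ (-k))) := by
    have h4 := measure_preimage_add μ (-a) (Metric.closedBall 0 ((q : ℝ) ^ (-k)))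
    unfold Measure.real
    rw [← h4]
    congr 2
    ext w
    simp [dist_eq_norm, neg_add_eq_sub]
  rw [h3, Complex.real_smul, ← mul_assoc, mul_comm (Complex.ofReal _), ← Complex.ofReal_mul,
    aux_measure_ball q n μ hμ k]
  simp

end MeasLemmas

section WeylLemmas

theorem aux_sympl_continuous {f : (Fin n → ℚ_[p]) × (Fin n → ℚ_[p]) → ℂ} [μ.IsAddHaarMeasure]
    (hf : Continuous f) (hfc : HasCompactSupport f) : Continuous (symplFourier p n μ f) := by
  have hchar := stdChar_continuous (q := p)
  have hfi : Integrable f (μ.prod μ) := hf.integrable_of_hasCompactSupport hfc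
  unfold symplFourier
  refine continuous_of_dominated (bound := fun w => ‖f w‖) ?_ ?_ hfi.norm ?_
  · intro z
    apply Continuous.aestronglyMeasurable
    fun_prop
  · intro z
    refine Filter.Eventually.of_forall fun w => ?_
    rw [norm_mul, stdChar_norm, one_mul]
  · refine Filter.Eventually.of_forall fun w => ?_
    fun_prop

theorem aux_sympl_compact {f : (Fin n → ℚ_[p]) × (Fin n → ℚ_[p]) → ℂ} [μ.IsAddHaarMeasure]
    (k : ℤ) (hk : ∀ x h, ‖h‖ ≤ (p : ℝ) ^ (-k) → f (x + h) = f x) :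
    HasCompactSupport (symplFourier p n μ f) := by
  have hp : (0 : ℝ) < p := by exact_mod_cast (Fact.out : p.Prime).pos
  apply HasCompactSupport.intro (isCompact_closedBall 0 ((p : ℝ) ^ k))
  intro z hz
  rw [mem_closedBall_zero_iff, Prod.norm_def, max_le_iff, not_and_or] at hz
  have hinv : (μ.prod μ).IsAddLeftInvariant := Measure.prod.instIsAddLeftInvariant
  unfold symplFourier
  change ∫ w, stdChar p (z.1 ⬝ᵥ w.2 - z.2 ⬝ᵥ w.1) * f w ∂(μ.prod μ) = 0
  rcases hz with hz | hz
  · obtain ⟨h, hh, hne⟩ := aux_exists_shift z.1 k hz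
    apply aux_integral_zero (μ.prod μ) _ (0, h) _ hne
    intro w
    rw [hk w (0, h) (by rw [Prod.norm_def]; exact max_le (by rw [norm_zero]; positivity) hh), ← mul_assoc,
      ← stdChar_add]
    congr 2
    simp only [Prod.snd_add, Prod.fst_add, dotProduct_add, dotProduct_zero]
    ring
  · obtain ⟨h, hh, hne⟩ := aux_exists_shift (-z.2) k (by rwa [norm_neg])
    apply aux_integral_zero (μ.prod μ) _ (h, 0) _ hne
    intro w
    rw [hk w (h, 0) (by rw [Prod.norm_def]; exact max_le hh (by rw [norm_zero]; positivity)), ← mul_assoc,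
      ← stdChar_add]
    congr 2
    simp only [Prod.snd_add, Prod.fst_add, dotProduct_add, dotProduct_zero, neg_dotProduct]
    ring

theorem aux_sympl_iter {f : (Fin n → ℚ_[p]) × (Fin n → ℚ_[p]) → ℂ} [μ.IsAddHaarMeasure]
    (hf : Continuous f) (hfc : HasCompactSupport f) (x y : Fin n → ℚ_[p]) :
    symplFourier p n μ f (x, y) =
      ∫ w, stdChar p (-(y ⬝ᵥ w)) * (∫ v, stdChar p (x ⬝ᵥ v) * f (w, v) ∂μ) ∂μ := by
  have hchar := stdChar_continuous (q := p)
  unfold symplFourier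
  rw [integral_prod]
  · congr 1
    ext w
    rw [← integral_const_mul]
    congr 1
    ext v
    rw [← mul_assoc, ← stdChar_add]
    congr 2
    change x ⬝ᵥ v - y ⬝ᵥ w = _
    ring
  · apply Continuous.integrable_of_hasCompactSupport
    · fun_prop
    · exact hfc.mul_left

theorem aux_kernel [μ.IsAddHaarMeasure]
    (hμ : μ {x : Fin n → ℚ_[p] | ∀ i, ‖x i‖ ≤ 1} = 1)
    (f : (Fin n → ℚ_[p]) × (Fin n → ℚ_[p]) → ℂ)
    (hf : IsLocallyConstant f) (hfc : HasCompactSupport f)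
    (ψ : (Fin n → ℚ_[p]) → ℂ)
    (hψ : IsLocallyConstant ψ) (ξ : Fin n → ℚ_[p]) :
    weylOp p n μ f ψ ξ = ∫ η, weylKernel p n μ f ξ η * ψ η ∂μ := by
  have hchar := stdChar_continuous (q := p)
  have hψ' := hψ.continuous
  obtain ⟨k, hk⟩ := aux_unif_const_pow (q := p) f hf hfc
  have hp : (0 : ℝ) < p := by exact_mod_cast (Fact.out : p.Prime).pos
  have hS := aux_sympl_continuous p n μ hf.continuous hfc
  have hSc := aux_sympl_compact p n μ k hk
  unfold weylOp
  rw [integral_prod]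
  swap
  · apply Continuous.integrable_of_hasCompactSupport
    · fun_prop
    · exact (hSc.mul_right).mul_right
  have key : ∀ x : Fin n → ℚ_[p],
      ∫ y, symplFourier p n μ f (x, y) * ψ (ξ + x) *
        stdChar p (∑ i, (y i * ξ i + x i * y i / 2)) ∂μ =
      weylKernel p n μ f ξ (ξ + x) * ψ (ξ + x) := by
    intro x
    have hinv := aux_inversion μ hμ k (fun w => ∫ v, stdChar p (x ⬝ᵥ v) * f (w, v) ∂μ)
      (by
        apply HasCompactSupport.intro (hfc.isCompact.image continuous_fst)
        intro w hw
        apply integral_eq_zero_of_ae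
        refine Filter.Eventually.of_forall fun v => ?_
        have : f (w, v) = 0 := by
          apply image_eq_zero_of_notMem_tsupport
          intro h
          exact hw ⟨(w, v), h, rfl⟩
        simp [this])
      (by
        intro w h hh
        congr 1
        ext v
        have := hk (w, v) (h, 0) (by
          rw [Prod.norm_def]
          exact max_le hh (by rw [norm_zero]; positivity))
        rw [Prod.mk_add_mk, add_zero] at this
        rw [this])
      (fun i => ((ξ + x) i + ξ i) / 2)
    simp_rw [← aux_sympl_iter p n μ hf.continuous hfc] at hinv
    have hK : weylKernel p n μ f ξ (ξ + x) =
        ∫ v, stdChar p (x ⬝ᵥ v) * f (fun i => ((ξ + x) i + ξ i) / 2, v) ∂μ := by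
      unfold weylKernel
      congr 1
      ext v
      rw [mul_comm]
      simp [dotProduct]
    rw [hK, ← hinv, ← integral_mul_const]
    congr 1
    ext y
    have : ∑ i, (y i * ξ i + x i * y i / 2) = y ⬝ᵥ (fun i => ((ξ + x) i + ξ i) / 2) := by
      unfold dotProduct
      apply Finset.sum_congr rfl
      intro i _
      simp only [Pi.add_apply]
      field_simp
      ring
    rw [this]
    ring
  simp_rw [key]
  exact integral_add_left_eq_self (μ := μ) (fun η => weylKernel p n μ f ξ η * ψ η) ξ

theorem aux_fourier_eq (f : (Fin n → ℚ_[p]) × (Fin n → ℚ_[p]) → ℂ)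
    (w : (Fin n → ℚ_[p]) × (Fin n → ℚ_[p])) :
    fourier2n p n μ f w = symplFourier p n μ f (w.2, -w.1) := by
  unfold fourier2n symplFourier
  congr 1
  ext x
  rw [mul_comm]
  congr 2
  simp [add_comm]

theorem aux_L1_eq [μ.IsAddHaarMeasure] (f : (Fin n → ℚ_[p]) × (Fin n → ℚ_[p]) → ℂ)
    (hS : Continuous (symplFourier p n μ f)) :
    ∫⁻ w, ‖fourier2n p n μ f w‖ₑ ∂(μ.prod μ) = ∫⁻ z, ‖symplFourier p n μ f z‖ₑ ∂(μ.prod μ) := by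
  simp_rw [aux_fourier_eq]
  have hT : MeasurePreserving (fun w : (Fin n → ℚ_[p]) × (Fin n → ℚ_[p]) => (w.2, -w.1))
      (μ.prod μ) (μ.prod μ) :=
    ((MeasurePreserving.id μ).prod (Measure.measurePreserving_neg μ)).comp
      Measure.measurePreserving_swap
  exact hT.lintegral_comp (f := fun z => ‖symplFourier p n μ f z‖ₑ) hS.enorm.measurable

theorem aux_cs {α : Type*} [MeasurableSpace α] (ν : Measure α) (F g : α → ENNReal)
    (hF : Measurable F) (hg : Measurable g) :
    (∫⁻ z, F z * g z ∂ν) ^ (2 : ℝ) ≤ (∫⁻ z, F z ∂ν) * ∫⁻ z, F z * g z ^ (2 : ℝ) ∂ν := by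
  have h := ENNReal.lintegral_mul_le_Lp_mul_Lq ν Real.HolderConjugate.two_two
    (f := fun z => F z ^ (1 / 2 : ℝ)) (g := fun z => F z ^ (1 / 2 : ℝ) * g z)
    (by fun_prop) (by fun_prop)
  have e0 : ∀ z, (F z ^ (1 / 2 : ℝ)) ^ (2 : ℝ) = F z := by
    intro z
    rw [← ENNReal.rpow_mul]; norm_num
  have e1 : ∀ z, F z ^ (1 / 2 : ℝ) * (F z ^ (1 / 2 : ℝ) * g z) = F z * g z := by
    intro z
    rw [← mul_assoc, ← ENNReal.rpow_add_of_nonneg _ _ (by norm_num) (by norm_num)]; norm_num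
  simp only [Pi.mul_apply, e0, e1, ENNReal.mul_rpow_of_nonneg _ _ (zero_le_two (α := ℝ))] at h
  calc _ ≤ ((∫⁻ z, F z ∂ν) ^ (1 / 2 : ℝ) * (∫⁻ z, F z * g z ^ (2 : ℝ) ∂ν) ^ (1 / 2 : ℝ)) ^ (2 : ℝ) :=
        ENNReal.rpow_le_rpow h (by norm_num)
    _ = _ := by
        rw [ENNReal.mul_rpow_of_nonneg _ _ (zero_le_two (α := ℝ)), ← ENNReal.rpow_mul,
          ← ENNReal.rpow_mul]
        norm_num

theorem aux_L2 [μ.IsAddHaarMeasure]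
    (f : (Fin n → ℚ_[p]) × (Fin n → ℚ_[p]) → ℂ)
    (hS : Continuous (symplFourier p n μ f))
    (ψ : (Fin n → ℚ_[p]) → ℂ) (hψ : Continuous ψ) :
    ∫⁻ ξ, ‖weylOp p n μ f ψ ξ‖ₑ ^ (2 : ℝ) ∂μ ≤
      (∫⁻ z, ‖symplFourier p n μ f z‖ₑ ∂(μ.prod μ)) ^ (2 : ℝ) * ∫⁻ ξ, ‖ψ ξ‖ₑ ^ (2 : ℝ) ∂μ := by
  set A := ∫⁻ z, ‖symplFourier p n μ f z‖ₑ ∂(μ.prod μ) with hA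
  have h1 : ∀ ξ, ‖weylOp p n μ f ψ ξ‖ₑ ^ (2 : ℝ) ≤
      A * ∫⁻ z, ‖symplFourier p n μ f z‖ₑ * ‖ψ (ξ + z.1)‖ₑ ^ (2 : ℝ) ∂(μ.prod μ) := by
    intro ξ
    refine le_trans (ENNReal.rpow_le_rpow ?_ (by norm_num))
      (aux_cs (μ.prod μ) (fun z => ‖symplFourier p n μ f z‖ₑ) (fun z => ‖ψ (ξ + z.1)‖ₑ)
        hS.enorm.measurable (Continuous.measurable (by fun_prop)))
    unfold weylOp
    refine (enorm_integral_le_lintegral_enorm _).trans_eq ?_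
    congr 1
    ext z
    have : ∀ x : ℚ_[p], ‖stdChar p x‖ₑ = 1 := by
      intro x
      rw [← ofReal_norm, stdChar_norm]; simp
    rw [enorm_mul, enorm_mul, this, mul_one]
  have hm : Measurable (Function.uncurry fun (ξ : Fin n → ℚ_[p])
      (z : (Fin n → ℚ_[p]) × (Fin n → ℚ_[p])) =>
      ‖symplFourier p n μ f z‖ₑ * ‖ψ (ξ + z.1)‖ₑ ^ (2 : ℝ)) := by
    have m1 : Measurable (fun w : (Fin n → ℚ_[p]) × ((Fin n → ℚ_[p]) × (Fin n → ℚ_[p])) =>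
        ‖symplFourier p n μ f w.2‖ₑ) := Continuous.measurable (by fun_prop)
    have m2 : Measurable (fun w : (Fin n → ℚ_[p]) × ((Fin n → ℚ_[p]) × (Fin n → ℚ_[p])) =>
        ‖ψ (w.1 + w.2.1)‖ₑ) := Continuous.measurable (by fun_prop)
    exact m1.mul (m2.pow_const _)
  calc _ ≤ ∫⁻ ξ, A * ∫⁻ z, ‖symplFourier p n μ f z‖ₑ * ‖ψ (ξ + z.1)‖ₑ ^ (2 : ℝ) ∂(μ.prod μ) ∂μ :=
        lintegral_mono h1
    _ = A * ∫⁻ ξ, ∫⁻ z, ‖symplFourier p n μ f z‖ₑ * ‖ψ (ξ + z.1)‖ₑ ^ (2 : ℝ) ∂(μ.prod μ) ∂μ :=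
        lintegral_const_mul _ hm.lintegral_prod_right
    _ = A * ∫⁻ z, ∫⁻ ξ, ‖symplFourier p n μ f z‖ₑ * ‖ψ (ξ + z.1)‖ₑ ^ (2 : ℝ) ∂μ ∂(μ.prod μ) := by
        rw [lintegral_lintegral_swap hm.aemeasurable]
    _ = A * ∫⁻ z, ‖symplFourier p n μ f z‖ₑ * (∫⁻ ξ, ‖ψ ξ‖ₑ ^ (2 : ℝ) ∂μ) ∂(μ.prod μ) := by
        congr 2
        ext z
        rw [lintegral_const_mul]
        · rw [lintegral_add_right_eq_self (μ := μ) (fun ξ => ‖ψ ξ‖ₑ ^ (2 : ℝ)) z.1]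
        · have m2 : Measurable (fun ξ : Fin n → ℚ_[p] => ‖ψ (ξ + z.1)‖ₑ) :=
            Continuous.measurable (by fun_prop)
          exact m2.pow_const _
    _ = _ := by
        rw [lintegral_mul_const _ hS.enorm.measurable, ← hA, ← mul_assoc, ENNReal.rpow_two, sq]

end WeylLemmas

/-- The Weyl operator is an integral operator with kernel `weylKernel`, and its `L²`
operator norm is bounded by the `L¹` norm of the Fourier transform of the symbol:
`‖W_f[ψ]‖₂ ≤ ‖F[f]‖₁ ‖ψ‖₂`. -/
theorem weylOp_kernel_and_L2_bound [μ.IsAddHaarMeasure]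
    (hμ : μ {x : Fin n → ℚ_[p] | ∀ i, ‖x i‖ ≤ 1} = 1)
    (f : (Fin n → ℚ_[p]) × (Fin n → ℚ_[p]) → ℂ)
    (hf : IsLocallyConstant f) (hfc : HasCompactSupport f)
    (ψ : (Fin n → ℚ_[p]) → ℂ)
    (hψ : IsLocallyConstant ψ) (hψc : HasCompactSupport ψ) :
    (∀ ξ : Fin n → ℚ_[p],
      weylOp p n μ f ψ ξ = ∫ η, weylKernel p n μ f ξ η * ψ η ∂μ) ∧
    eLpNorm (weylOp p n μ f ψ) 2 μ ≤
      eLpNorm (fourier2n p n μ f) 1 (μ.prod μ) * eLpNorm ψ 2 μ := by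
  refine ⟨fun ξ => aux_kernel p n μ hμ f hf hfc ψ hψ ξ, ?_⟩
  have hS := aux_sympl_continuous p n μ hf.continuous hfc
  have h2 := aux_L2 p n μ f hS ψ hψ.continuous
  rw [eLpNorm_one_eq_lintegral_enorm, aux_L1_eq p n μ f hS,
    eLpNorm_eq_lintegral_rpow_enorm_toReal (by norm_num) (by norm_num),
    eLpNorm_eq_lintegral_rpow_enorm_toReal (by norm_num) (by norm_num)]
  simp only [ENNReal.toReal_ofNat]
  calc _ ≤ _ := ENNReal.rpow_le_rpow h2 (by norm_num)
    _ = _ := by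
      rw [ENNReal.mul_rpow_of_nonneg _ _ (by norm_num), ← ENNReal.rpow_mul]
      norm_num
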